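/- arXiv:quant-ph/0003101 — 6 statements merged into one kernel-verified Lean document; each statement's English description precedes it below -/
import Mathlib

section
/- For every 2ⁿ×2ⁿ complex density matrix ρ, the uniform mixture of conjugations by all n-fold tensor products of Pauli matrices yields the totally mixed state: (1/4ⁿ)·Σ_{x∈{0,1,2,3}ⁿ} σ̄ₓ ρ σ̄ₓ† = (1/2ⁿ)·I_{2ⁿ}. In particular, the superoperator E = {(1/√4ⁿ)·σ̄ₓ | x∈{0,1,2,3}ⁿ} constitutes a private quantum channel for the set of all n-qubit pure states with output state the totally mixed state, so 2n bits of shared classical key suffice to privately transmit any n-qubit state. -/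
/-!
The Pauli matrices satisfy the completeness relation
`∑ₓ σₓ(i,a) · conj σₓ(j,b) = 2 δᵢⱼ δₐᵦ` (`sum_pauli_mul_star`). Taking products over the `n` tensor
factors and exchanging sum and product gives the same relation for `σ̄ₓ` with constant `2ⁿ`
(`sum_pauliTensor_mul_star`). Hence the `(i,j)` entry of `∑ₓ σ̄ₓ ρ σ̄ₓ†`, which is
`∑ₐᵦ ρ(a,b) ∑ₓ σ̄ₓ(i,a) conj σ̄ₓ(j,b)`, equals `2ⁿ δᵢⱼ tr ρ`, and `2ⁿ / 4ⁿ = 1 / 2ⁿ`.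
-/

open Matrix ComplexOrder

/-- The four Pauli matrices σ₀, σ₁, σ₂, σ₃. -/
noncomputable def pauli (i : Fin 4) : Matrix (Fin 2) (Fin 2) ℂ :=
  if i = 0 then !![1, 0; 0, 1]
  else if i = 1 then !![0, 1; 1, 0]
  else if i = 2 then !![0, -Complex.I; Complex.I, 0]
  else !![1, 0; 0, -1]

/-- For `x ∈ {0,1,2,3}ⁿ`, the n-fold tensor product `σ̄ₓ = σ_{x 1} ⊗ ⋯ ⊗ σ_{x n}`,
as a matrix on the n-qubit space `ℂ^{2ⁿ} = (Fin n → Fin 2) → ℂ`. -/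
noncomputable def pauliTensor {n : ℕ} (x : Fin n → Fin 4) :
    Matrix (Fin n → Fin 2) (Fin n → Fin 2) ℂ :=
  Matrix.of fun i j => ∏ k, pauli (x k) (i k) (j k)

theorem sum_pauli_mul_star (i j a b : Fin 2) :
    ∑ x : Fin 4, pauli x i a * star (pauli x j b) =
      (if i = j then 1 else 0) * (if a = b then 2 else 0) := by
  fin_cases i <;> fin_cases j <;> fin_cases a <;> fin_cases b <;>
    simp [Fin.sum_univ_four, pauli] <;> norm_num

theorem sum_pauliTensor_mul_star {n : ℕ} (i j a b : Fin n → Fin 2) :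
    ∑ x : Fin n → Fin 4, pauliTensor x i a * star (pauliTensor x j b) =
      (if i = j then 1 else 0) * (if a = b then (2 : ℂ) ^ n else 0) := by
  calc ∑ x : Fin n → Fin 4, pauliTensor x i a * star (pauliTensor x j b)
      = ∑ x : Fin n → Fin 4, ∏ k, pauli (x k) (i k) (a k) * star (pauli (x k) (j k) (b k)) := by
        simp [pauliTensor, Finset.prod_mul_distrib]
    _ = ∏ k, ∑ y : Fin 4, pauli y (i k) (a k) * star (pauli y (j k) (b k)) := by
        rw [Finset.prod_univ_sum, Fintype.piFinset_univ]
    _ = (∏ k, if i k = j k then (1 : ℂ) else 0) * ∏ k, if a k = b k then (2 : ℂ) else 0 := by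
        simp only [sum_pauli_mul_star, Finset.prod_mul_distrib]
    _ = _ := by
        congr 1
        · simp [Finset.prod_ite_zero, funext_iff]
        · simp [Finset.prod_ite_zero, funext_iff]

/-- The uniform mixture of conjugations by all n-fold tensor products of Pauli
matrices sends every n-qubit density matrix to the totally mixed state
`(1/2ⁿ)·I_{2ⁿ}`; i.e. the superoperator `{(1/√4ⁿ)·σ̄ₓ | x ∈ {0,1,2,3}ⁿ}` is a
private quantum channel for all n-qubit states, using 2n bits of key. -/
theorem pauliTensor_mixture_of_density (n : ℕ)
    (ρ : Matrix (Fin n → Fin 2) (Fin n → Fin 2) ℂ)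
    (hρ : ρ.PosSemidef) (htr : ρ.trace = 1) :
    ((4 : ℂ) ^ n)⁻¹ • (∑ x : Fin n → Fin 4, pauliTensor x * ρ * (pauliTensor x)ᴴ) =
      ((2 : ℂ) ^ n)⁻¹ • (1 : Matrix (Fin n → Fin 2) (Fin n → Fin 2) ℂ) := by
  have key : ∑ x : Fin n → Fin 4, pauliTensor x * ρ * (pauliTensor x)ᴴ =
      (2 : ℂ) ^ n • (1 : Matrix (Fin n → Fin 2) (Fin n → Fin 2) ℂ) := by
    ext i j
    calc (∑ x : Fin n → Fin 4, pauliTensor x * ρ * (pauliTensor x)ᴴ) i j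
        = ∑ x : Fin n → Fin 4, ∑ b, ∑ a,
            ρ a b * (pauliTensor x i a * star (pauliTensor x j b)) := by
          simp only [Matrix.sum_apply, Matrix.mul_apply, Matrix.conjTranspose_apply,
            Finset.sum_mul]
          refine Finset.sum_congr rfl fun x _ => Finset.sum_congr rfl fun b _ =>
            Finset.sum_congr rfl fun a _ => ?_
          ring
      _ = ∑ b, ∑ a, ρ a b * ∑ x : Fin n → Fin 4,
            pauliTensor x i a * star (pauliTensor x j b) := by
          rw [Finset.sum_comm]
          refine Finset.sum_congr rfl fun b _ => ?_
          rw [Finset.sum_comm]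
          simp only [Finset.mul_sum]
      _ = ρ.trace * ((if i = j then 1 else 0) * (2 : ℂ) ^ n) := by
          simp only [sum_pauliTensor_mul_star, mul_ite, mul_zero, Finset.sum_ite_eq',
            Finset.sum_ite_eq, Finset.mem_univ, if_true, Matrix.trace, Matrix.diag_apply,
            Finset.sum_mul]
      _ = _ := by
          rw [htr]
          simp [Matrix.one_apply]
  rw [key, smul_smul]
  congr 1
  rw [show (4 : ℂ) = 2 * 2 by norm_num, mul_pow]
  field_simp
end

section
/- Let B = {cos(θ)|0⟩ + sin(θ)|1⟩ : 0 ≤ θ < 2π} be the set of real-amplitude qubit states, and let |φ⟩ = |φ₁⟩ ⊗ ⋯ ⊗ |φₙ⟩ be any n-fold tensor product of states from B. Then (1/2ⁿ)·Σ_{x∈{0,2}ⁿ} σ̄ₓ |φ⟩⟨φ| σ̄ₓ† = (1/2ⁿ)·I_{2ⁿ}. In particular, the superoperator {(1/√2ⁿ)·σ̄ₓ | x∈{0,2}ⁿ} is a private quantum channel for B^{⊗n} with output the totally mixed state, so n bits of shared key suffice for this set of states. -/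
/-!
For each `x`, the conjugated state is the projector onto `σ̄ₓ|φ⟩`, whose entries are products over
the qubits (`pauliTensor_mulVec_realQubitTensor`). Exchanging the sum over `x ∈ {0,2}ⁿ` with the
product over the qubits reduces the claim to one qubit (`sum_pauli02_realQubit`), where a real unit
vector and its image under `σ₂` form an orthonormal basis, so their projectors sum to the identity.
-/

open Matrix ComplexConjugate

/-- The outer product |φ⟩⟨φ| of a vector with itself. -/
noncomputable def outer {ι : Type*} (φ : ι → ℂ) : Matrix ι ι ℂ :=
  Matrix.of fun i j => φ i * conj (φ j)

/-- The real-amplitude qubit state cos(θ)|0⟩ + sin(θ)|1⟩. -/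
noncomputable def realQubit (θ : ℝ) : Fin 2 → ℂ :=
  ![(Real.cos θ : ℂ), (Real.sin θ : ℂ)]

/-- The n-fold tensor product of the real-amplitude qubit states with angles
`θ 1, …, θ n`, an element of `B^{⊗n}`. -/
noncomputable def realQubitTensor {n : ℕ} (θ : Fin n → ℝ) : (Fin n → Fin 2) → ℂ :=
  fun i => ∏ k, realQubit (θ k) (i k)

/-- A tensor product of Paulis acts factorwise on a tensor product of qubit states. -/
theorem pauliTensor_mulVec_realQubitTensor {n : ℕ} (y : Fin n → Fin 4) (θ : Fin n → ℝ)
    (i : Fin n → Fin 2) :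
    (pauliTensor y *ᵥ realQubitTensor θ) i = ∏ k, (pauli (y k) *ᵥ realQubit (θ k)) (i k) := by
  simp only [Matrix.mulVec, dotProduct, pauliTensor, realQubitTensor, Matrix.of_apply,
    ← Finset.prod_mul_distrib]
  exact (Fintype.prod_sum fun k b => pauli (y k) (i k) b * realQubit (θ k) b).symm

theorem mul_outer_mul_conjTranspose_apply {ι : Type*} [Fintype ι] (A : Matrix ι ι ℂ)
    (φ : ι → ℂ) (i j : ι) :
    (A * outer φ * Aᴴ) i j = (A *ᵥ φ) i * conj ((A *ᵥ φ) j) := by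
  have h : outer φ = Matrix.vecMulVec φ (star φ) := rfl
  rw [h, Matrix.mul_vecMulVec, Matrix.vecMulVec_mul, ← Matrix.star_mulVec]
  rfl

/-- The case of one qubit: `σ₂` sends the real unit vector `(c, s)` to `-i • (s, -c)`, which is
orthogonal to it, so the two projectors add up to the identity. -/
theorem sum_pauli02_realQubit (θ : ℝ) (a b : Fin 2) :
    ∑ x : Fin 2, (pauli (if x = 0 then 0 else 2) *ᵥ realQubit θ) a *
        conj ((pauli (if x = 0 then 0 else 2) *ᵥ realQubit θ) b) =
      if a = b then 1 else 0 := by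
  have h : (Real.cos θ : ℂ) ^ 2 + (Real.sin θ : ℂ) ^ 2 = 1 := by
    exact_mod_cast Real.cos_sq_add_sin_sq θ
  have hI := Complex.I_sq
  fin_cases a <;> fin_cases b <;>
    simp [pauli, realQubit, Matrix.mulVec, dotProduct, Fin.sum_univ_two, Complex.conj_ofReal,
      -Complex.ofReal_cos, -Complex.ofReal_sin] <;>
    grind

/-- The uniform mixture of conjugations by the 2ⁿ tensor products
`σ̄ₓ, x ∈ {0,2}ⁿ`, maps every tensor product of real-amplitude qubit states to
the totally mixed state; i.e. `{(1/√2ⁿ)·σ̄ₓ | x ∈ {0,2}ⁿ}` is a private quantum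
channel for `B^{⊗n}`, using n bits of key. -/
theorem pauliTensor02_mixture_of_real_product (n : ℕ) (θ : Fin n → ℝ) :
    ((2 : ℂ) ^ n)⁻¹ • (∑ x : Fin n → Fin 2,
        pauliTensor (fun k => if x k = 0 then (0 : Fin 4) else 2) *
          outer (realQubitTensor θ) *
          (pauliTensor (fun k => if x k = 0 then (0 : Fin 4) else 2))ᴴ) =
      ((2 : ℂ) ^ n)⁻¹ • (1 : Matrix (Fin n → Fin 2) (Fin n → Fin 2) ℂ) := by
  congr 1
  ext i j
  simp only [Matrix.sum_apply, mul_outer_mul_conjTranspose_apply,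
    pauliTensor_mulVec_realQubitTensor, map_prod, ← Finset.prod_mul_distrib]
  rw [← Fintype.prod_sum fun k (b : Fin 2) =>
    (pauli (if b = 0 then 0 else 2) *ᵥ realQubit (θ k)) (i k) *
      conj ((pauli (if b = 0 then 0 else 2) *ᵥ realQubit (θ k)) (j k))]
  simp only [sum_pauli02_realQubit, Matrix.one_apply, funext_iff]
  simp [Finset.prod_ite_zero]
end

section
/- Suppose p₁,…,p_N are probabilities (pᵢ ≥ 0, Σᵢ pᵢ = 1) and U₁,…,U_N are 2ⁿ×2ⁿ unitary matrices such that Σᵢ pᵢ Uᵢ ρ Uᵢ† = (1/2ⁿ)·I_{2ⁿ} for every 2ⁿ×2ⁿ density matrix ρ. Then pᵢ ≤ 1/4ⁿ for every i; consequently N ≥ 4ⁿ. -/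
/-!
Write `d = 2 ^ n`. Density matrices span all matrices, so by linearity the hypothesis says
`∑ i, pᵢ Uᵢ X Uᵢᴴ = (tr X / d) • 1` for every `X` (`channel_eq_of_density`). Read on matrix
units, this says that the vectorised unitaries satisfy `∑ i, pᵢ |Uᵢ⟩⟨Uᵢ| = (1 / d) • 1`
(`channel_entries`). Evaluating this quadratic form at `|Uⱼ⟩`, whose squared Hilbert–Schmidt norm
is `d`, gives `∑ i, pᵢ |tr (Uⱼᴴ Uᵢ)|² = 1` (`sum_prob_normSq_trace`). All terms are nonnegative
and the `j`-th one is `pⱼ d²`, hence `pⱼ ≤ 1 / d² = 1 / 4 ^ n`. Summing over `j` bounds `N`.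
-/

open Matrix ComplexOrder

/-- Polarization: rank-one matrices `x yᴴ` are combinations of rank-one positive ones. -/
lemma four_smul_vecMulVec_star {m : Type*} (x y : m → ℂ) :
    (4 : ℂ) • vecMulVec x (star y) =
      vecMulVec (x + y) (star (x + y)) - vecMulVec (x - y) (star (x - y))
        + Complex.I • vecMulVec (x + Complex.I • y) (star (x + Complex.I • y))
        - Complex.I • vecMulVec (x - Complex.I • y) (star (x - Complex.I • y)) := by
  ext a b
  simp [vecMulVec_apply]
  ring_nf
  simp only [Complex.I_sq]
  ring

/-- A linear map on matrices that sends every density matrix to zero is zero. -/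
lemma linearMap_eq_zero_of_density {m : Type*} [Fintype m] [DecidableEq m]
    (T : Matrix m m ℂ →ₗ[ℂ] Matrix m m ℂ)
    (hT : ∀ ρ : Matrix m m ℂ, ρ.PosSemidef → ρ.trace = 1 → T ρ = 0) (X : Matrix m m ℂ) :
    T X = 0 := by
  have hpsd : ∀ A : Matrix m m ℂ, A.PosSemidef → T A = 0 := by
    intro A hA
    by_cases h0 : A.trace = 0
    · rw [hA.trace_eq_zero_iff.mp h0, map_zero]
    · have hinv : 0 ≤ (A.trace)⁻¹ := inv_nonneg.mpr hA.trace_nonneg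
      have h := hT ((A.trace)⁻¹ • A) (hA.smul hinv) (by simp [trace_smul, h0])
      rw [map_smul] at h
      exact (smul_eq_zero.mp h).resolve_left (inv_ne_zero h0)
  have hrank : ∀ x y : m → ℂ, T (vecMulVec x (star y)) = 0 := by
    intro x y
    have h4 : T ((4 : ℂ) • vecMulVec x (star y)) = 0 := by
      rw [four_smul_vecMulVec_star]
      simp only [map_add, map_sub, map_smul,
        hpsd _ (posSemidef_vecMulVec_self_star _)]
      simp
    rw [map_smul] at h4
    exact (smul_eq_zero.mp h4).resolve_left (by norm_num)
  rw [matrix_eq_sum_single X]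
  simp only [map_sum]
  refine Finset.sum_eq_zero fun k _ => Finset.sum_eq_zero fun l _ => ?_
  have h : Matrix.single k l (X k l) = vecMulVec (Pi.single k (X k l)) (star (Pi.single l 1)) := by
    ext a b
    by_cases ha : k = a <;> by_cases hb : l = b <;>
      simp [vecMulVec_apply, eq_comm, ha, hb]
  rw [h, hrank]

lemma channel_eq_of_density {m ι : Type*} [Fintype m] [DecidableEq m] [Fintype ι]
    (p : ι → ℝ) (U : ι → Matrix m m ℂ) (c : ℂ)
    (h : ∀ ρ : Matrix m m ℂ, ρ.PosSemidef → ρ.trace = 1 →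
      ∑ i, (p i : ℂ) • (U i * ρ * (U i)ᴴ) = c • (1 : Matrix m m ℂ)) (X : Matrix m m ℂ) :
    ∑ i, (p i : ℂ) • (U i * X * (U i)ᴴ) = (X.trace * c) • (1 : Matrix m m ℂ) := by
  let T : Matrix m m ℂ →ₗ[ℂ] Matrix m m ℂ :=
    { toFun := fun X => ∑ i, (p i : ℂ) • (U i * X * (U i)ᴴ) - (X.trace * c) • 1
      map_add' := by
        intro X Y
        simp only [mul_add, add_mul, smul_add, Finset.sum_add_distrib, trace_add, add_smul]
        abel
      map_smul' := by
        intro r X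
        simp only [Matrix.mul_smul, Matrix.smul_mul, trace_smul, smul_eq_mul, RingHom.id_apply,
          smul_sub, Finset.smul_sum, smul_smul, mul_assoc, mul_left_comm r, mul_comm r] }
  exact sub_eq_zero.mp (linearMap_eq_zero_of_density T
    (fun ρ hρ h1 => sub_eq_zero.mpr (by rw [h ρ hρ h1, h1, one_mul])) X)

/-- The entries of `∑ i, pᵢ |Uᵢ⟩⟨Uᵢ| = c • 1`. -/
lemma channel_entries {m ι : Type*} [Fintype m] [DecidableEq m] [Fintype ι]
    (p : ι → ℝ) (U : ι → Matrix m m ℂ) (c : ℂ)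
    (h : ∀ X : Matrix m m ℂ,
      ∑ i, (p i : ℂ) • (U i * X * (U i)ᴴ) = (X.trace * c) • (1 : Matrix m m ℂ))
    (a k b l : m) :
    ∑ i, (p i : ℂ) * (U i a k * star (U i b l)) = if a = b ∧ k = l then c else 0 := by
  have h1 := congrFun (congrFun (h (Matrix.single k l 1)) a) b
  have h2 : ∀ i, (U i * Matrix.single k l (1 : ℂ) * (U i)ᴴ : Matrix m m ℂ) a b =
      U i a k * star (U i b l) := by
    intro i
    simp [Matrix.mul_apply, Matrix.single_apply, ite_and]
  simp only [Matrix.sum_apply, Matrix.smul_apply, h2, smul_eq_mul] at h1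
  rw [h1]
  by_cases hk : k = l <;> by_cases ha : a = b <;>
    simp [hk, ha, Matrix.one_apply, Matrix.trace_single_eq_of_ne]

/-- The quadratic form `∑ i, pᵢ |Uᵢ⟩⟨Uᵢ| = c • 1` evaluated at `|A⟩`. -/
lemma sum_prob_normSq_trace {m ι : Type*} [Fintype m] [DecidableEq m] [Fintype ι]
    (p : ι → ℝ) (U : ι → Matrix m m ℂ) (c : ℂ)
    (h : ∀ a k b l, ∑ i, (p i : ℂ) * (U i a k * star (U i b l)) =
      if a = b ∧ k = l then c else 0) (A : Matrix m m ℂ) :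
    ∑ i, (p i : ℂ) * ((Aᴴ * U i).trace * star (Aᴴ * U i).trace) = c * (Aᴴ * A).trace := by
  have ht : ∀ B : Matrix m m ℂ, (Aᴴ * B).trace = ∑ x : m × m, star (A x.1 x.2) * B x.1 x.2 := by
    intro B
    rw [Fintype.sum_prod_type_right]
    simp [Matrix.trace, Matrix.mul_apply]
  have key : ∀ x y : m × m, ∑ i, (p i : ℂ) * (U i x.1 x.2 * star (U i y.1 y.2)) =
      if x = y then c else 0 := by
    intro x y
    rw [h]
    simp only [Prod.ext_iff]
  calc ∑ i, (p i : ℂ) * ((Aᴴ * U i).trace * star (Aᴴ * U i).trace)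
      = ∑ x : m × m, ∑ y : m × m, star (A x.1 x.2) * A y.1 y.2 *
          ∑ i, (p i : ℂ) * (U i x.1 x.2 * star (U i y.1 y.2)) := by
        simp only [ht, star_sum, Finset.sum_mul_sum]
        simp only [Finset.mul_sum]
        rw [Finset.sum_comm]
        refine Finset.sum_congr rfl fun x _ => ?_
        rw [Finset.sum_comm]
        refine Finset.sum_congr rfl fun y _ => Finset.sum_congr rfl fun i _ => ?_
        simp only [star_mul, star_star]
        ring
    _ = c * (Aᴴ * A).trace := by
        simp only [key, ht, Finset.mul_sum, mul_ite, mul_zero, Finset.sum_ite_eq,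
          Finset.mem_univ, if_true]
        exact Finset.sum_congr rfl fun x _ => by ring

/-- If the mixture of unitaries Uᵢ applied with probabilities pᵢ sends every
n-qubit density matrix to the totally mixed state, then every pᵢ is at most
1/4ⁿ, and consequently there are at least 4ⁿ unitaries. -/
theorem pqc_prob_le_and_card_ge (n N : ℕ)
    (p : Fin N → ℝ) (hp0 : ∀ i, 0 ≤ p i) (hp1 : ∑ i, p i = 1)
    (U : Fin N → Matrix (Fin (2 ^ n)) (Fin (2 ^ n)) ℂ)
    (hU : ∀ i, U i ∈ Matrix.unitaryGroup (Fin (2 ^ n)) ℂ)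
    (hPQC : ∀ ρ : Matrix (Fin (2 ^ n)) (Fin (2 ^ n)) ℂ,
      ρ.PosSemidef → ρ.trace = 1 →
        ∑ i, (p i : ℂ) • (U i * ρ * (U i)ᴴ) =
          ((2 : ℂ) ^ n)⁻¹ • (1 : Matrix (Fin (2 ^ n)) (Fin (2 ^ n)) ℂ)) :
    (∀ i, p i ≤ ((4 : ℝ) ^ n)⁻¹) ∧ 4 ^ n ≤ N := by
  have hle : ∀ j, p j ≤ ((4 : ℝ) ^ n)⁻¹ := by
    intro j
    have htr : ((U j)ᴴ * U j).trace = (2 : ℂ) ^ n := by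
      have : (U j)ᴴ * U j = 1 := Matrix.mem_unitaryGroup_iff'.mp (hU j)
      simp [this]
    have hsum := sum_prob_normSq_trace p U _
      (channel_entries p U _ (channel_eq_of_density p U _ hPQC)) (U j)
    rw [htr, inv_mul_cancel₀ (by positivity)] at hsum
    have hreal : ∑ i, p i * Complex.normSq ((U j)ᴴ * U i).trace = 1 := by
      have hs : ∀ z : ℂ, z * star z = (Complex.normSq z : ℂ) := Complex.mul_conj
      simp only [hs] at hsum
      exact_mod_cast hsum
    have hj : p j * Complex.normSq ((U j)ᴴ * U j).trace ≤ 1 := by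
      rw [← hreal]
      exact Finset.single_le_sum
        (f := fun i => p i * Complex.normSq ((U j)ᴴ * U i).trace)
        (fun i _ => mul_nonneg (hp0 i) (Complex.normSq_nonneg _)) (Finset.mem_univ j)
    have hsq : Complex.normSq ((2 : ℂ) ^ n) = 4 ^ n := by
      rw [map_pow]
      norm_num [Complex.normSq_ofNat]
    rw [htr, hsq] at hj
    rw [← one_div, le_div_iff₀ (by positivity)]
    exact hj
  refine ⟨hle, ?_⟩
  have h : (1 : ℝ) ≤ N * ((4 : ℝ) ^ n)⁻¹ := by
    rw [← hp1]
    simpa using Finset.sum_le_sum fun i (_ : i ∈ Finset.univ) => hle i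
  rw [← div_eq_mul_inv, le_div_iff₀ (by positivity), one_mul] at h
  exact_mod_cast h
end

section
/- Suppose p₁,…,p_N are probabilities (pᵢ ≥ 0, Σᵢ pᵢ = 1) and U₁,…,U_N are 2ⁿ×2ⁿ unitary matrices such that Σᵢ pᵢ Uᵢ |φ⟩⟨φ| Uᵢ† = (1/2ⁿ)·I_{2ⁿ} for every unit vector |φ⟩ ∈ ℂ^{2ⁿ}. Then the Shannon entropy of the key satisfies H(p₁,…,p_N) = −Σᵢ pᵢ log₂ pᵢ ≥ 2n. -/
/-!
Write `d = 2 ^ n`. The channel hypothesis polarizes to the orthogonality relation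
`∑ᵢ pᵢ Uᵢ(a,b) conj (Uᵢ(c,e)) = δ_{ac} δ_{be} / d`, which says that the Choi matrix
`∑ᵢ pᵢ vec(Uᵢ) vec(Uᵢ)†` equals `I / d` (`pqc_orthogonality`). Pairing it with `Uₖ` gives
`∑ᵢ pᵢ |tr (Uₖ† Uᵢ)|² = tr (Uₖ† Uₖ) / d = 1`; the term `i = k` alone is `pₖ d²`, so every
probability is at most `1 / d² = 2 ^ (-2n)` (`pqc_prob_le`). A distribution all of whose
weights are at most `2 ^ (-2n)` has entropy at least `2n`.
-/

open Matrix ComplexConjugate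

/-- Polarization: a complex matrix whose quadratic form vanishes on unit vectors is zero. -/
lemma matrix_eq_zero_of_unit_form {m : Type*} [Fintype m] [DecidableEq m] (T : Matrix m m ℂ)
    (h : ∀ φ : m → ℂ, star φ ⬝ᵥ φ = 1 → star φ ⬝ᵥ (T *ᵥ φ) = 0) : T = 0 := by
  have hall : ∀ x : EuclideanSpace ℂ m, inner ℂ (Matrix.toEuclideanLin T x) x = 0 := by
    intro x
    rw [inner_eq_zero_symm]
    by_cases hx : x = 0
    · simp [hx]
    have hn : (‖x‖ : ℂ) ≠ 0 := by simpa using hx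
    have hunit : star ((‖x‖ : ℂ)⁻¹ • x.ofLp) ⬝ᵥ ((‖x‖ : ℂ)⁻¹ • x.ofLp) = 1 := by
      have h1 : inner ℂ x x = (‖x‖ : ℂ) ^ 2 := inner_self_eq_norm_sq_to_K x
      rw [EuclideanSpace.inner_eq_star_dotProduct, dotProduct_comm] at h1
      rw [star_smul, smul_dotProduct, dotProduct_smul, h1]
      simp
      field_simp
    have h2 := h _ hunit
    rw [star_smul, Matrix.mulVec_smul, smul_dotProduct, dotProduct_smul] at h2
    rw [EuclideanSpace.inner_eq_star_dotProduct, dotProduct_comm]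
    simpa [hx] using h2
  have := (inner_map_self_eq_zero (Matrix.toEuclideanLin T)).1 hall
  simpa using this

/-- If the channel sends every pure state to `t • 1`, its Choi matrix is `t • 1`, written in
coordinates; the application has `t = 1 / d`. -/
lemma pqc_orthogonality {m ι : Type*} [Fintype m] [DecidableEq m] [Fintype ι]
    (p : ι → ℝ) (U : ι → Matrix m m ℂ) (t : ℂ)
    (h : ∀ φ : m → ℂ, star φ ⬝ᵥ φ = 1 →
      ∑ i, (p i : ℂ) • (U i * outer φ * (U i)ᴴ) = t • (1 : Matrix m m ℂ))
    (a b c e : m) :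
    ∑ i, (p i : ℂ) * (U i a b * conj (U i c e)) =
      t * ((if a = c then 1 else 0) * (if b = e then 1 else 0)) := by
  -- For fixed `a`, `c`, the `(a, c)` entry of the channel identity is a quadratic form in `φ`.
  have hT : (∑ i, (p i : ℂ) • vecMulVec (star (U i c)) (U i a)) -
      (t * (if a = c then 1 else 0)) • (1 : Matrix m m ℂ) = 0 := by
    apply matrix_eq_zero_of_unit_form
    intro φ hφ
    have h1 := congrFun (congrFun (h φ hφ) a) c
    have h2 : ∀ i, (U i * outer φ * (U i)ᴴ) a c = (U i a ⬝ᵥ φ) * (star φ ⬝ᵥ star (U i c)) := by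
      intro i
      have : outer φ = vecMulVec φ (star φ) := by
        ext x y
        simp [outer, vecMulVec_apply]
      rw [this, mul_vecMulVec, vecMulVec_mul, vecMulVec_apply]
      rfl
    rw [Matrix.sum_apply] at h1
    simp only [Matrix.smul_apply, h2, smul_eq_mul, Matrix.one_apply] at h1
    rw [Matrix.sub_mulVec, dotProduct_sub, Matrix.smul_mulVec, Matrix.one_mulVec,
      dotProduct_smul, hφ, Matrix.sum_mulVec, dotProduct_sum, sub_eq_zero]
    simp only [Matrix.smul_mulVec, dotProduct_smul, smul_eq_mul, mul_one, vecMulVec_mulVec]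
    rw [← h1]
    refine Finset.sum_congr rfl fun i _ => ?_
    simp [mul_comm]
  have h3 := congrFun (congrFun hT e) b
  rw [Matrix.sub_apply, Matrix.sum_apply] at h3
  simp only [Matrix.smul_apply, vecMulVec_apply, smul_eq_mul, Matrix.one_apply, Matrix.zero_apply,
    sub_eq_zero, Pi.star_apply] at h3
  rw [← mul_assoc]
  simp only [eq_comm (a := b)]
  rw [← h3]
  refine Finset.sum_congr rfl fun i _ => ?_
  rw [mul_comm (U i a b)]
  rfl

/-- Each key has probability at most `1 / d²`. -/
lemma pqc_prob_le {m ι : Type*} [Fintype m] [DecidableEq m] [Nonempty m] [Fintype ι]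
    (p : ι → ℝ) (hp0 : ∀ i, 0 ≤ p i) (U : ι → Matrix m m ℂ)
    (hU : ∀ i, U i ∈ Matrix.unitaryGroup m ℂ)
    (h : ∀ φ : m → ℂ, star φ ⬝ᵥ φ = 1 →
      ∑ i, (p i : ℂ) • (U i * outer φ * (U i)ᴴ) = (Fintype.card m : ℂ)⁻¹ • (1 : Matrix m m ℂ))
    (k : ι) : p k * (Fintype.card m : ℝ) ^ 2 ≤ 1 := by
  have hd : (Fintype.card m : ℂ) ≠ 0 := by simp
  -- `f i = tr (Uₖ† Uᵢ)`
  let f : ι → ℂ := fun i => ∑ x : m × m, conj (U k x.1 x.2) * U i x.1 x.2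
  have hfk : f k = Fintype.card m := by
    have h1 := congrArg Matrix.trace (Matrix.mem_unitaryGroup_iff.1 (hU k))
    rw [Matrix.trace_one] at h1
    rw [← h1]
    simp only [f, Fintype.sum_prod_type, Matrix.trace, Matrix.diag, Matrix.mul_apply,
      Matrix.star_apply]
    refine Finset.sum_congr rfl fun _ _ => Finset.sum_congr rfl fun _ _ => mul_comm _ _
  have hsum : ∑ i, (p i : ℂ) * (f i * conj (f i)) = 1 := by
    have horth := pqc_orthogonality p U _ h
    calc ∑ i, (p i : ℂ) * (f i * conj (f i))
        = ∑ i, ∑ x : m × m, ∑ y : m × m, (conj (U k x.1 x.2) * U k y.1 y.2) *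
            ((p i : ℂ) * (U i x.1 x.2 * conj (U i y.1 y.2))) := by
          refine Finset.sum_congr rfl fun i _ => ?_
          simp only [f, map_sum, map_mul, Complex.conj_conj]
          rw [Finset.sum_mul_sum]
          simp only [Finset.mul_sum]
          refine Finset.sum_congr rfl fun _ _ => Finset.sum_congr rfl fun _ _ => ?_
          ring
      _ = ∑ x : m × m, ∑ y : m × m, (conj (U k x.1 x.2) * U k y.1 y.2) *
            ((Fintype.card m : ℂ)⁻¹ * (if x = y then 1 else 0)) := by
          rw [Finset.sum_comm]
          refine Finset.sum_congr rfl fun x _ => ?_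
          rw [Finset.sum_comm]
          refine Finset.sum_congr rfl fun y _ => ?_
          rw [← Finset.mul_sum, horth]
          congr 2
          simp only [Prod.ext_iff]
          split_ifs <;> simp_all
      _ = (Fintype.card m : ℂ)⁻¹ * f k := by
          simp only [f, Finset.mul_sum]
          refine Finset.sum_congr rfl fun x _ => ?_
          simp [mul_comm]
      _ = 1 := by rw [hfk, inv_mul_cancel₀ hd]
  have hre : ∑ i, p i * Complex.normSq (f i) = 1 := by
    simp only [Complex.mul_conj] at hsum
    exact_mod_cast hsum
  have hle := Finset.single_le_sum (f := fun i => p i * Complex.normSq (f i))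
    (fun i _ => mul_nonneg (hp0 i) (Complex.normSq_nonneg _)) (Finset.mem_univ k)
  simp only [hfk, Complex.normSq_natCast] at hle
  rw [hre] at hle
  simpa [sq] using hle

/-- If the mixture of unitaries Uᵢ with probabilities pᵢ sends every n-qubit
pure state to the totally mixed state (a private quantum channel without
ancilla for all n-qubit states), then the Shannon entropy of the key
distribution is at least 2n bits. -/
theorem pqc_no_ancilla_entropy_ge (n N : ℕ)
    (p : Fin N → ℝ) (hp0 : ∀ i, 0 ≤ p i) (hp1 : ∑ i, p i = 1)
    (U : Fin N → Matrix (Fin (2 ^ n)) (Fin (2 ^ n)) ℂ)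
    (hU : ∀ i, U i ∈ Matrix.unitaryGroup (Fin (2 ^ n)) ℂ)
    (hPQC : ∀ φ : Fin (2 ^ n) → ℂ, star φ ⬝ᵥ φ = 1 →
      ∑ i, (p i : ℂ) • (U i * outer φ * (U i)ᴴ) =
        ((2 : ℂ) ^ n)⁻¹ • (1 : Matrix (Fin (2 ^ n)) (Fin (2 ^ n)) ℂ)) :
    -∑ i, p i * Real.logb 2 (p i) ≥ 2 * n := by
  have hp : ∀ i, p i * ((2 : ℝ) ^ n) ^ 2 ≤ 1 := by
    intro k
    have := pqc_prob_le p hp0 U hU (by simpa using hPQC) k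
    simpa using this
  have hterm : ∀ i, p i * (2 * n) ≤ -(p i * Real.logb 2 (p i)) := by
    intro i
    rcases (hp0 i).eq_or_lt with h0 | hpos
    · simp [← h0]
    have h1 : Real.logb 2 (p i * ((2 : ℝ) ^ n) ^ 2) ≤ 0 :=
      Real.logb_nonpos (by norm_num) (by positivity) (hp i)
    rw [Real.logb_mul hpos.ne' (by positivity), Real.logb_pow, Real.logb_pow,
      Real.logb_self_eq_one (by norm_num)] at h1
    push_cast at h1
    nlinarith
  calc (2 * n : ℝ) = ∑ i, p i * (2 * n) := by rw [← Finset.sum_mul, hp1, one_mul]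
    _ ≤ ∑ i, -(p i * Real.logb 2 (p i)) := Finset.sum_le_sum fun i _ => hterm i
    _ = -∑ i, p i * Real.logb 2 (p i) := Finset.sum_neg_distrib _
end

section
/- Suppose p₁,…,p_N are probabilities summing to 1, U₁,…,U_N are 2^m×2^m unitary matrices, ρ_a is a 2^{m−n}×2^{m−n} density matrix, and ρ₀ is a 2^m×2^m density matrix such that Σᵢ pᵢ Uᵢ (|φ⟩⟨φ| ⊗ ρ_a) Uᵢ† = ρ₀ for every unit vector |φ⟩ ∈ ℂ^{2ⁿ} (i.e., a private quantum channel, possibly with ancilla, for all n-qubit states). Then H(p₁,…,p_N) = −Σᵢ pᵢ log₂ pᵢ ≥ 2n, and in particular N ≥ 2^{2n}. -/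
/-!
Write `d = 2 ^ n`. The theorem follows from a min-entropy bound: every key probability satisfies
`p i ≤ 1 / d ^ 2`, which gives both `H(p) ≥ log₂ (d ^ 2) = 2 n` and `N ≥ d ^ 2`.

Let `E X = ∑ j, p j • U j (X ⊗ ρa) (U j)†`. By polarization, `E |a⟩⟨b| = δ_{ab} ρ₀`
(`map_single_of_outer`). Let `μ > 0` be the largest eigenvalue of `ρa`, with unit eigenvector `w`.
Since `d ρ₀ = E 1` is a convex combination of unitary conjugates of `1 ⊗ ρa`, it follows that
`d ρ₀ ≤ μ`. Fix a key `i` and put `x a = U i (e a ⊗ w)`. Then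
`∑ a b, ⟨x a, E |a⟩⟨b| (x b)⟩ = ∑ a, ⟨x a, ρ₀ (x a)⟩ ≤ d * (μ / d) = μ`, whereas the left side is a
sum of nonnegative terms over the keys, the term of the key `i` being `p i * ⟨d w, ρa (d w)⟩`,
which equals `p i * d ^ 2 * μ`. Hence `p i * d ^ 2 ≤ 1`. (This tests the channel on one half of a
maximally entangled state, written without the extra tensor factor.)
-/

open Matrix ComplexOrder ComplexConjugate Kronecker

/-- A linear map that is constant on pure states kills the off-diagonal matrix units and takes
the constant value on the diagonal ones. -/
lemma map_single_of_outer {ι V : Type*} [Fintype ι] [DecidableEq ι] [AddCommGroup V] [Module ℂ V]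
    (L : Matrix ι ι ℂ →ₗ[ℂ] V) (ρ : V)
    (h : ∀ φ : ι → ℂ, star φ ⬝ᵥ φ = 1 → L (outer φ) = ρ) (a b : ι) :
    L (Matrix.single a b 1) = if a = b then ρ else 0 := by
  have diag : ∀ a, L (Matrix.single a a 1) = ρ := by
    intro a
    rw [← h (Pi.single a 1) (by simp)]
    congr 1
    ext i j
    by_cases hi : a = i <;> by_cases hj : a = j <;>
      simp [outer, Matrix.single_apply, Pi.single_apply, hi, hj, eq_comm]
  split_ifs with hab
  · subst hab; exact diag a
  -- the superpositions `(e a + c • e b) / √2` with `|c| = 1`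
  have key : ∀ c : ℂ, c * conj c = 1 →
      conj c • L (Matrix.single a b 1) + c • L (Matrix.single b a 1) = 0 := by
    intro c hc
    have h2 : ((Real.sqrt 2 : ℝ) : ℂ) * (Real.sqrt 2 : ℝ) = 2 := by
      rw [← Complex.ofReal_mul, Real.mul_self_sqrt (by norm_num)]; simp
    have h2' : (((Real.sqrt 2 : ℝ) : ℂ))⁻¹ * ((Real.sqrt 2 : ℝ) : ℂ)⁻¹ = 2⁻¹ := by
      rw [← mul_inv, h2]
    set s : ℂ := ((Real.sqrt 2 : ℝ) : ℂ)⁻¹ with hs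
    have hsc : conj s = s := by rw [hs, map_inv₀, Complex.conj_ofReal]
    have hu := h (fun k => s * ((Pi.single a 1 : ι → ℂ) k + c * (Pi.single b 1 : ι → ℂ) k)) (by
      have hba : b ≠ a := fun e => hab e.symm
      have : ∀ k,
          star (s * ((Pi.single a 1 : ι → ℂ) k + c * (Pi.single b 1 : ι → ℂ) k)) *
          (s * ((Pi.single a 1 : ι → ℂ) k + c * (Pi.single b 1 : ι → ℂ) k)) =
          2⁻¹ * ((Pi.single a 1 : ι → ℂ) k + (Pi.single b 1 : ι → ℂ) k) := by
        intro k
        rw [← h2']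
        by_cases h1 : k = a
        · subst h1
          simp [hab, hsc]
        · by_cases h3 : k = b
          · subst h3
            simp [hba, hsc]
            linear_combination s * s * hc
          · simp [h1, h3]
      simp only [dotProduct, Pi.star_apply, this, ← Finset.mul_sum, Finset.sum_add_distrib]
      simp
      norm_num)
    have hout : outer (fun k => s * ((Pi.single a 1 : ι → ℂ) k + c * (Pi.single b 1 : ι → ℂ) k)) =
        (2⁻¹ : ℂ) • (Matrix.single a a (1 : ℂ) + Matrix.single b b 1 +
          (conj c • Matrix.single a b 1 + c • Matrix.single b a 1)) := by
      ext i j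
      have e1 : ∀ x y i j : ι, Matrix.single x y (1 : ℂ) i j =
          (Pi.single x 1 : ι → ℂ) i * (Pi.single y 1 : ι → ℂ) j := by
        intro x y i j
        by_cases hi : x = i <;> by_cases hj : y = j <;>
          simp [Matrix.single_apply, Pi.single_apply, hi, hj, eq_comm]
      have e2 : ∀ x i : ι, conj ((Pi.single x 1 : ι → ℂ) i) =
          (Pi.single x 1 : ι → ℂ) i := by
        intro x i
        by_cases hi : i = x <;> simp [Pi.single_apply, hi]
      simp only [outer, Matrix.of_apply, Matrix.smul_apply, Matrix.add_apply, e1, map_mul, map_add,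
        e2, hsc, smul_eq_mul, ← h2']
      linear_combination
        (s * s * (Pi.single b 1 : ι → ℂ) i * (Pi.single b 1 : ι → ℂ) j) * hc
    rw [hout] at hu
    simp only [map_smul, map_add, diag] at hu
    have h3 := congrArg (fun v => (2 : ℂ) • v) hu
    simp only [smul_smul] at h3
    norm_num [two_smul] at h3
    exact h3
  have k1 := key 1 (by simp)
  have k2 := key Complex.I (by simp)
  simp only [map_one, one_smul, Complex.conj_I] at k1 k2
  have k3 := congrArg (fun v => (Complex.I / 2) • v) k2
  have k4 := congrArg (fun v => (1 / 2 : ℂ) • v) k1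
  simp only [smul_add, smul_smul, smul_zero] at k3 k4
  have i2 : Complex.I * Complex.I = -1 := Complex.I_mul_I
  have e1 : Complex.I / 2 * -Complex.I = 1 / 2 := by linear_combination (-1 / 2) * i2
  have e2 : Complex.I / 2 * Complex.I = -(1 / 2) := by linear_combination (1 / 2) * i2
  rw [e1, e2] at k3
  calc L (Matrix.single a b 1)
      = ((1 / 2 : ℂ) • L (Matrix.single a b 1) + -(1 / 2 : ℂ) • L (Matrix.single b a 1)) +
        ((1 / 2 : ℂ) • L (Matrix.single a b 1) + (1 / 2 : ℂ) • L (Matrix.single b a 1)) := by module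
    _ = 0 := by rw [k3, k4, add_zero]

/-- The largest eigenvalue of a density matrix, together with a unit eigenvector. -/
lemma exists_max_eigenvalue {κ : Type*} [Fintype κ] [DecidableEq κ] (A : Matrix κ κ ℂ)
    (hA : A.PosSemidef) (htr : A.trace = 1) :
    ∃ (μ : ℝ) (w : κ → ℂ), 0 < μ ∧ star w ⬝ᵥ w = 1 ∧ A *ᵥ w = (μ : ℂ) • w ∧
      ∀ v, star v ⬝ᵥ A *ᵥ v ≤ (μ : ℂ) * (star v ⬝ᵥ v) := by
  have hH := hA.isHermitian
  have hne : Nonempty κ := by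
    by_contra hcon
    rw [not_nonempty_iff] at hcon
    simp [Matrix.trace] at htr
  obtain ⟨k, hk⟩ := Finite.exists_max hH.eigenvalues
  have hsum : ∑ i, hH.eigenvalues i = 1 := by
    have := hH.trace_eq_sum_eigenvalues
    rw [htr] at this
    have h2 := congrArg Complex.re this
    simpa using h2.symm
  refine ⟨hH.eigenvalues k, ⇑(hH.eigenvectorBasis k), ?_, ?_, ?_, ?_⟩
  · by_contra hcon
    have : ∑ i, hH.eigenvalues i ≤ 0 :=
      Finset.sum_nonpos fun i _ => (hk i).trans (not_lt.mp hcon)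
    linarith
  · have h1 := hH.eigenvectorBasis.orthonormal.1 k
    have h2 := inner_self_eq_norm_sq_to_K (𝕜 := ℂ) (hH.eigenvectorBasis k)
    rw [h1, EuclideanSpace.inner_eq_star_dotProduct, dotProduct_comm] at h2
    simpa using h2
  · have := hH.mulVec_eigenvectorBasis k
    rw [this]
    ext i
    simp
  · intro v
    set W : Matrix κ κ ℂ := (hH.eigenvectorUnitary : Matrix κ κ ℂ) with hW
    have hWW : W * Wᴴ = 1 := by
      have := Matrix.mem_unitaryGroup_iff.mp hH.eigenvectorUnitary.2
      simpa [Matrix.star_eq_conjTranspose] using this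
    have hspec : A = W * Matrix.diagonal (fun i => (hH.eigenvalues i : ℂ)) * Wᴴ := by
      have := hH.spectral_theorem
      rw [Unitary.conjStarAlgAut_apply] at this
      simpa [Matrix.star_eq_conjTranspose, Function.comp_def] using this
    have hstar : star (Wᴴ *ᵥ v) = star v ᵥ* W := by
      rw [Matrix.star_mulVec, Matrix.conjTranspose_conjTranspose]
    have h1 : star v ⬝ᵥ A *ᵥ v =
        star (Wᴴ *ᵥ v) ⬝ᵥ (Matrix.diagonal (fun i => (hH.eigenvalues i : ℂ)) *ᵥ (Wᴴ *ᵥ v)) := by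
      conv_lhs => rw [hspec]
      rw [hstar, ← Matrix.dotProduct_mulVec, Matrix.mulVec_mulVec, Matrix.mulVec_mulVec,
        Matrix.mul_assoc]
    have h2 : star v ⬝ᵥ v = star (Wᴴ *ᵥ v) ⬝ᵥ (Wᴴ *ᵥ v) := by
      rw [hstar, ← Matrix.dotProduct_mulVec, Matrix.mulVec_mulVec, hWW, Matrix.one_mulVec]
    rw [h1, h2]
    simp only [dotProduct, Matrix.mulVec_diagonal, Finset.mul_sum]
    refine Finset.sum_le_sum fun i _ => ?_
    have h3 : (0 : ℂ) ≤ star (Wᴴ *ᵥ v) i * (Wᴴ *ᵥ v) i := star_mul_self_nonneg _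
    have h4 : (hH.eigenvalues i : ℂ) ≤ (hH.eigenvalues k : ℂ) := by exact_mod_cast hk i
    calc star (Wᴴ *ᵥ v) i * ((hH.eigenvalues i : ℂ) * (Wᴴ *ᵥ v) i)
        = (hH.eigenvalues i : ℂ) * (star (Wᴴ *ᵥ v) i * (Wᴴ *ᵥ v) i) := by ring
      _ ≤ _ := mul_le_mul_of_nonneg_right h4 h3

lemma dotProduct_conj_mulVec {ν : Type*} [Fintype ν] (V B : Matrix ν ν ℂ) (x y : ν → ℂ) :
    star x ⬝ᵥ (V * B * Vᴴ) *ᵥ y = star (Vᴴ *ᵥ x) ⬝ᵥ B *ᵥ (Vᴴ *ᵥ y) := by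
  rw [Matrix.star_mulVec, Matrix.conjTranspose_conjTranspose, ← Matrix.dotProduct_mulVec,
    Matrix.mulVec_mulVec, Matrix.mulVec_mulVec, Matrix.mul_assoc]

lemma dotProduct_single_kronecker_mulVec {ι κ : Type*} [Fintype ι] [DecidableEq ι] [Fintype κ]
    (A : Matrix κ κ ℂ) (a b : ι) (x y : ι × κ → ℂ) :
    star x ⬝ᵥ (Matrix.single a b (1 : ℂ) ⊗ₖ A) *ᵥ y =
      star (fun k => x (a, k)) ⬝ᵥ A *ᵥ (fun k => y (b, k)) := by
  have h : ∀ i k, ((Matrix.single a b (1 : ℂ) ⊗ₖ A) *ᵥ y) (i, k) =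
      if a = i then (A *ᵥ (fun k => y (b, k))) k else 0 := by
    intro i k
    simp only [Matrix.mulVec, dotProduct, Fintype.sum_prod_type, Matrix.kroneckerMap_apply,
      Matrix.single_apply]
    by_cases hi : a = i
    · simp [hi]
    · simp [hi]
  simp only [dotProduct, Fintype.sum_prod_type, h, mul_ite, mul_zero, Pi.star_apply]
  rw [Finset.sum_comm]
  simp

/-- Min-entropy bound for private quantum channels with ancilla: each key has probability at most
the inverse square of the dimension of the message space. -/
lemma key_prob_le {ι κ : Type*} [Fintype ι] [DecidableEq ι] [Fintype κ] [DecidableEq κ] {N : ℕ}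
    (p : Fin N → ℝ) (hp0 : ∀ i, 0 ≤ p i) (hp1 : ∑ i, p i = 1)
    (U : Fin N → Matrix (ι × κ) (ι × κ) ℂ)
    (hU : ∀ i, U i ∈ Matrix.unitaryGroup (ι × κ) ℂ)
    (ρa : Matrix κ κ ℂ) (hρa : ρa.PosSemidef) (hρatr : ρa.trace = 1)
    (ρ₀ : Matrix (ι × κ) (ι × κ) ℂ)
    (hPQC : ∀ φ : ι → ℂ, star φ ⬝ᵥ φ = 1 →
      ∑ i, (p i : ℂ) • (U i * (outer φ ⊗ₖ ρa) * (U i)ᴴ) = ρ₀) (i : Fin N) :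
    p i * (Fintype.card ι : ℝ) ^ 2 ≤ 1 := by
  obtain ⟨μ, w, hμ, hw, hwμ, hmax⟩ := exists_max_eigenvalue ρa hρa hρatr
  -- the channel `E` as a linear map on matrices
  let L : Matrix ι ι ℂ →ₗ[ℂ] Matrix (ι × κ) (ι × κ) ℂ :=
    { toFun := fun X => ∑ i, (p i : ℂ) • (U i * (X ⊗ₖ ρa) * (U i)ᴴ)
      map_add' := by
        intro X Y
        simp only [Matrix.add_kronecker, mul_add, add_mul, smul_add, Finset.sum_add_distrib]
      map_smul' := by
        intro c X
        simp only [Matrix.smul_kronecker, Matrix.mul_smul, Matrix.smul_mul, RingHom.id_apply,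
          Finset.smul_sum]
        exact Finset.sum_congr rfl fun j _ => smul_comm _ _ _ }
  have hL := map_single_of_outer L ρ₀ hPQC
  have hquad : ∀ a b (x y : ι × κ → ℂ), star x ⬝ᵥ L (Matrix.single a b 1) *ᵥ y =
      ∑ j, (p j : ℂ) * (star (fun k => ((U j)ᴴ *ᵥ x) (a, k)) ⬝ᵥ
        ρa *ᵥ (fun k => ((U j)ᴴ *ᵥ y) (b, k))) := by
    intro a b x y
    change star x ⬝ᵥ (∑ i, (p i : ℂ) • (U i * (Matrix.single a b 1 ⊗ₖ ρa) * (U i)ᴴ)) *ᵥ y = _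
    rw [Matrix.sum_mulVec, dotProduct_sum]
    refine Finset.sum_congr rfl fun j _ => ?_
    rw [Matrix.smul_mulVec, dotProduct_smul, smul_eq_mul, dotProduct_conj_mulVec,
      dotProduct_single_kronecker_mulVec]
  have hpC : ∀ j, (0 : ℂ) ≤ (p j : ℂ) := fun j => by exact_mod_cast hp0 j
  have hUU : ∀ j, U j * (U j)ᴴ = 1 := fun j => by
    simpa [Matrix.star_eq_conjTranspose] using Matrix.mem_unitaryGroup_iff.mp (hU j)
  have hUU' : ∀ j, (U j)ᴴ * U j = 1 := fun j => by
    simpa [Matrix.star_eq_conjTranspose] using Matrix.mem_unitaryGroup_iff'.mp (hU j)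
  -- `d ρ₀ ≤ μ` as quadratic forms
  have hρ₀ : ∀ x : ι × κ → ℂ,
      (Fintype.card ι : ℂ) * (star x ⬝ᵥ ρ₀ *ᵥ x) ≤ (μ : ℂ) * (star x ⬝ᵥ x) := by
    intro x
    have hnorm : ∀ j, ∑ a, (star (fun k => ((U j)ᴴ *ᵥ x) (a, k)) ⬝ᵥ
        (fun k => ((U j)ᴴ *ᵥ x) (a, k))) = star x ⬝ᵥ x := by
      intro j
      have : star x ⬝ᵥ x = star ((U j)ᴴ *ᵥ x) ⬝ᵥ ((U j)ᴴ *ᵥ x) := by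
        rw [Matrix.star_mulVec, Matrix.conjTranspose_conjTranspose, ← Matrix.dotProduct_mulVec,
          Matrix.mulVec_mulVec, hUU, Matrix.one_mulVec]
      rw [this]
      simp [dotProduct, Fintype.sum_prod_type]
    calc (Fintype.card ι : ℂ) * (star x ⬝ᵥ ρ₀ *ᵥ x)
        = ∑ a : ι, star x ⬝ᵥ L (Matrix.single a a 1) *ᵥ x := by simp [hL]
      _ = ∑ j, (p j : ℂ) * ∑ a, (star (fun k => ((U j)ᴴ *ᵥ x) (a, k)) ⬝ᵥ
            ρa *ᵥ (fun k => ((U j)ᴴ *ᵥ x) (a, k))) := by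
          simp only [hquad, Finset.mul_sum]
          rw [Finset.sum_comm]
      _ ≤ ∑ j, (p j : ℂ) * ∑ a, (μ : ℂ) * (star (fun k => ((U j)ᴴ *ᵥ x) (a, k)) ⬝ᵥ
            (fun k => ((U j)ᴴ *ᵥ x) (a, k))) :=
          Finset.sum_le_sum fun j _ => mul_le_mul_of_nonneg_left
            (Finset.sum_le_sum fun a _ => hmax _) (hpC j)
      _ = (μ : ℂ) * (star x ⬝ᵥ x) := by
          simp only [← Finset.mul_sum, hnorm]
          rw [← Finset.sum_mul, ← Complex.ofReal_sum, hp1]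
          simp
  -- the test vectors `x a = U i (e a ⊗ w)`
  let f : ι → ι × κ → ℂ := fun a q => if q.1 = a then w q.2 else 0
  let x : ι → ι × κ → ℂ := fun a => U i *ᵥ f a
  have hff : ∀ a, star (f a) ⬝ᵥ f a = 1 := by
    intro a
    rw [← hw]
    simp only [f, dotProduct, Fintype.sum_prod_type, Pi.star_apply]
    rw [Finset.sum_comm]
    simp
  have hxx : ∀ a, star (x a) ⬝ᵥ x a = 1 := by
    intro a
    simp only [x]
    rw [Matrix.star_mulVec, ← Matrix.dotProduct_mulVec, Matrix.mulVec_mulVec, hUU',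
      Matrix.one_mulVec, hff]
  have hUx : ∀ a, (U i)ᴴ *ᵥ x a = f a := by
    intro a
    simp only [x]
    rw [Matrix.mulVec_mulVec, hUU', Matrix.one_mulVec]
  let s : Fin N → κ → ℂ := fun j => ∑ a, fun k => ((U j)ᴴ *ᵥ x a) (a, k)
  have hsi : s i = (Fintype.card ι : ℂ) • w := by
    ext k
    simp [s, hUx, f]
  have htotal : ∑ a, ∑ b, star (x a) ⬝ᵥ L (Matrix.single a b 1) *ᵥ x b =
      ∑ j, (p j : ℂ) * (star (s j) ⬝ᵥ ρa *ᵥ s j) := by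
    simp only [hquad]
    rw [Finset.sum_congr rfl fun a _ => Finset.sum_comm, Finset.sum_comm]
    refine Finset.sum_congr rfl fun j _ => ?_
    simp only [← Finset.mul_sum]
    congr 1
    simp only [s, star_sum, sum_dotProduct, Matrix.mulVec_sum, dotProduct_sum]
    exact Finset.sum_comm
  have hdiag : ∑ a, ∑ b, star (x a) ⬝ᵥ L (Matrix.single a b 1) *ᵥ x b =
      ∑ a, star (x a) ⬝ᵥ ρ₀ *ᵥ x a := by
    refine Finset.sum_congr rfl fun a _ => ?_
    rw [Finset.sum_eq_single a]
    · rw [hL, if_pos rfl]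
    · intro b _ hb
      rw [hL, if_neg (Ne.symm hb)]
      simp
    · simp
  have hpos : ∀ j, (0 : ℂ) ≤ (p j : ℂ) * (star (s j) ⬝ᵥ ρa *ᵥ s j) := fun j =>
    mul_nonneg (hpC j) (hρa.dotProduct_mulVec_nonneg _)
  have hlow : (p i : ℂ) * ((Fintype.card ι : ℂ) ^ 2 * μ) ≤ ∑ a, star (x a) ⬝ᵥ ρ₀ *ᵥ x a := by
    rw [← hdiag, htotal]
    refine le_trans (le_of_eq ?_)
      (Finset.single_le_sum (fun j _ => hpos j) (Finset.mem_univ i))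
    rw [hsi, Matrix.mulVec_smul, hwμ, star_smul, smul_dotProduct, dotProduct_smul,
      dotProduct_smul, hw]
    simp
    ring_nf
    simp
  have hupp : (Fintype.card ι : ℂ) * ∑ a, star (x a) ⬝ᵥ ρ₀ *ᵥ x a ≤ (Fintype.card ι : ℂ) * μ := by
    rw [Finset.mul_sum]
    refine (Finset.sum_le_sum fun a _ => hρ₀ (x a)).trans (le_of_eq ?_)
    simp [hxx]
  have hd : (0 : ℂ) ≤ (Fintype.card ι : ℂ) := by positivity
  have hfin := (mul_le_mul_of_nonneg_left hlow hd).trans hupp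
  have hreal : (Fintype.card ι : ℝ) * (p i * ((Fintype.card ι : ℝ) ^ 2 * μ)) ≤
      (Fintype.card ι : ℝ) * μ := by exact_mod_cast hfin
  rcases Nat.eq_zero_or_pos (Fintype.card ι) with h0 | h0
  · simp [h0]
  · have hc : (0 : ℝ) < Fintype.card ι := by exact_mod_cast h0
    have h1 := le_of_mul_le_mul_left hreal hc
    have h2 : (p i * (Fintype.card ι : ℝ) ^ 2) * μ ≤ 1 * μ := by linarith
    exact le_of_mul_le_mul_right h2 hμ

/-- Main lower bound: any private quantum channel for all n-qubit states,
even one using an ancilla ρ_a, has key entropy H(p₁,…,p_N) ≥ 2n; in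
particular N ≥ 2^{2n}. Here the 2^m-dimensional total space is represented
as ℂ^{2ⁿ} ⊗ ℂ^{2^{m−n}}. -/
theorem pqc_entropy_ge_two_n (n m N : ℕ) (hnm : n ≤ m)
    (p : Fin N → ℝ) (hp0 : ∀ i, 0 ≤ p i) (hp1 : ∑ i, p i = 1)
    (U : Fin N → Matrix (Fin (2 ^ n) × Fin (2 ^ (m - n)))
      (Fin (2 ^ n) × Fin (2 ^ (m - n))) ℂ)
    (hU : ∀ i, U i ∈ Matrix.unitaryGroup (Fin (2 ^ n) × Fin (2 ^ (m - n))) ℂ)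
    (ρa : Matrix (Fin (2 ^ (m - n))) (Fin (2 ^ (m - n))) ℂ)
    (hρa : ρa.PosSemidef) (hρatr : ρa.trace = 1)
    (ρ₀ : Matrix (Fin (2 ^ n) × Fin (2 ^ (m - n)))
      (Fin (2 ^ n) × Fin (2 ^ (m - n))) ℂ)
    (hρ₀ : ρ₀.PosSemidef) (hρ₀tr : ρ₀.trace = 1)
    (hPQC : ∀ φ : Fin (2 ^ n) → ℂ, star φ ⬝ᵥ φ = 1 →
      ∑ i, (p i : ℂ) • (U i * (outer φ ⊗ₖ ρa) * (U i)ᴴ) = ρ₀) :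
    (-∑ i, p i * Real.logb 2 (p i) ≥ 2 * n) ∧ 2 ^ (2 * n) ≤ N := by
  have hle : ∀ i, p i * 2 ^ (2 * n) ≤ 1 := by
    intro i
    have h := key_prob_le p hp0 hp1 U hU ρa hρa hρatr ρ₀ hPQC i
    rw [Fintype.card_fin] at h
    push_cast at h
    rwa [← pow_mul, mul_comm n 2] at h
  constructor
  · have hterm : ∀ i, p i * Real.logb 2 (p i) ≤ p i * (-(2 * n)) := by
      intro i
      rcases (hp0 i).eq_or_lt with h0 | h0
      · simp [← h0]
      · refine mul_le_mul_of_nonneg_left ?_ (hp0 i)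
        have h1 := Real.logb_le_logb_of_le (b := 2) (by norm_num) (by positivity) (hle i)
        rw [Real.logb_mul h0.ne' (by positivity), Real.logb_one, Real.logb_pow,
          Real.logb_self_eq_one (by norm_num)] at h1
        push_cast at h1
        linarith
    have hsum := Finset.sum_le_sum fun i (_ : i ∈ Finset.univ) => hterm i
    rw [← Finset.sum_mul, hp1] at hsum
    linarith
  · have hsum := Finset.sum_le_sum fun i (_ : i ∈ Finset.univ) => hle i
    rw [← Finset.sum_mul, hp1] at hsum
    simp at hsum
    exact_mod_cast hsum
end

section
/- Let B^{⊗n} denote the set of n-fold tensor products of real-amplitude qubit states cos(θ)|0⟩ + sin(θ)|1⟩. Suppose p₁,…,p_N are probabilities summing to 1, U₁,…,U_N are 2^m×2^m unitary matrices, ρ_a is a 2^{m−n}×2^{m−n} density matrix, and ρ₀ is a 2^m×2^m density matrix such that Σᵢ pᵢ Uᵢ (|φ⟩⟨φ| ⊗ ρ_a) Uᵢ† = ρ₀ for every |φ⟩ ∈ B^{⊗n}. Then H(p₁,…,p_N) = −Σᵢ pᵢ log₂ pᵢ ≥ n, and in particular N ≥ 2ⁿ. -/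
/-!
Only the classical inputs `|x⟩⟨x|` matter. Write `S` for the von Neumann entropy and compute
`S(ρ₀)` in two ways.

* For one fixed `x`, diagonalizing `ρa` exhibits `ρ₀` as an ensemble of pure states with weights
  `p i * l k`, where `l` is the spectrum of `ρa`. The entropy of a mixture of pure states is at most
  that of its weights (`entropy_le_of_ensemble`), so `S(ρ₀) ≤ H(p) + S(ρa)`.
* Averaging over all `x`, `ρ₀` is also the output for the input `(1 / 2ⁿ) ⊗ ρa`. In an eigenbasis of
  `ρ₀` each unitary acts on spectra as a doubly stochastic matrix, so concavity of `-t log t`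
  (`entropy_le_of_mixed_bistochastic`) gives `S(ρ₀) ≥ n + S(ρa)`.

Hence `H(p) ≥ n`, and `N ≥ 2ⁿ` because `H(p) ≤ log₂ N`. Entropies are computed with the natural
logarithm through `Real.negMulLog` and rescaled at the end.
-/

open Matrix ComplexOrder ComplexConjugate Kronecker

/-- If the ensemble `(q a, c a)` has the diagonal density matrix `ρ = diag μ`, then
`q b * ⟨c b, ρ⁻¹ c b⟩ ≤ 1` for each member. This is a form of the operator inequality
`q b • |c b⟩⟨c b| ≤ ρ`; terms with `μ j = 0` are zero by the convention for division. -/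
lemma weighted_sum_le_one {A J : Type*} [Fintype A] [Fintype J] [DecidableEq J]
    (q : A → ℝ) (hq : ∀ a, 0 ≤ q a) (c : A → J → ℂ) (μ : J → ℝ)
    (h : ∀ j j', ∑ a, (q a : ℂ) * (c a j * conj (c a j')) = if j = j' then (μ j : ℂ) else 0)
    (b : A) : q b * ∑ j, Complex.normSq (c b j) / μ j ≤ 1 := by
  set s := ∑ j, Complex.normSq (c b j) / μ j with hs
  -- `w` is the conjugate of `ρ⁻¹ c_b`; evaluating the form of `ρ` on it gives `s`,
  -- while the member `b` of the ensemble alone contributes `q b * s ^ 2`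
  let w : J → ℂ := fun j => conj (c b j) / μ j
  have h1 : ∑ a, q a * Complex.normSq (∑ j, w j * c a j) = s := by
    apply Complex.ofReal_injective
    push_cast
    calc ∑ a, (q a : ℂ) * (Complex.normSq (∑ j, w j * c a j) : ℂ)
        = ∑ a, ∑ j, ∑ j', w j * conj (w j') * ((q a : ℂ) * (c a j * conj (c a j'))) := by
          refine Finset.sum_congr rfl fun a _ => ?_
          rw [← Complex.mul_conj, map_sum, Finset.sum_mul_sum, Finset.mul_sum]
          refine Finset.sum_congr rfl fun j _ => ?_
          rw [Finset.mul_sum]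
          refine Finset.sum_congr rfl fun j' _ => ?_
          rw [map_mul]; ring
      _ = ∑ j, ∑ j', w j * conj (w j') * ∑ a, ((q a : ℂ) * (c a j * conj (c a j'))) := by
          rw [Finset.sum_comm]
          refine Finset.sum_congr rfl fun j _ => ?_
          rw [Finset.sum_comm]
          refine Finset.sum_congr rfl fun j' _ => ?_
          rw [Finset.mul_sum]
      _ = (s : ℂ) := by
          rw [hs]
          push_cast
          refine Finset.sum_congr rfl fun j _ => ?_
          simp only [h, mul_ite, mul_zero, Finset.sum_ite_eq, Finset.mem_univ, if_true, w]
          rw [← Complex.mul_conj]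
          simp only [map_div₀, Complex.conj_conj, Complex.conj_ofReal]
          by_cases hm : (μ j : ℂ) = 0
          · simp [hm]
          · field_simp
  have h2 : Complex.normSq (∑ j, w j * c b j) = s ^ 2 := by
    have : ∑ j, w j * c b j = (s : ℂ) := by
      rw [hs]; push_cast
      refine Finset.sum_congr rfl fun j _ => ?_
      rw [← Complex.mul_conj]; simp only [w]; ring
    rw [this, Complex.normSq_ofReal]; ring
  have h3 : q b * s ^ 2 ≤ s := by
    rw [← h2]
    conv_rhs => rw [← h1]
    exact Finset.single_le_sum (f := fun a => q a * Complex.normSq (∑ j, w j * c a j))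
      (fun a _ => mul_nonneg (hq a) (Complex.normSq_nonneg _)) (Finset.mem_univ b)
  have := hq b
  by_contra! hlt
  have hs0 : 0 < s := by
    by_contra! h0
    nlinarith
  nlinarith

/-- The von Neumann entropy of a mixture of pure states is at most the Shannon entropy of the
mixing weights; here the density matrix of the mixture is `diag μ`. -/
lemma entropy_le_of_ensemble {A J : Type*} [Fintype A] [Fintype J] [DecidableEq J]
    (q : A → ℝ) (hq : ∀ a, 0 ≤ q a) (c : A → J → ℂ) (μ : J → ℝ)
    (hc : ∀ a, ∑ j, Complex.normSq (c a j) = 1)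
    (h : ∀ j j', ∑ a, (q a : ℂ) * (c a j * conj (c a j')) = if j = j' then (μ j : ℂ) else 0) :
    ∑ j, Real.negMulLog (μ j) ≤ ∑ a, Real.negMulLog (q a) := by
  have hμ : ∀ j, μ j = ∑ a, q a * Complex.normSq (c a j) := by
    intro j
    have := h j j
    simp only [if_true, Complex.mul_conj] at this
    exact_mod_cast this.symm
  -- `log q ≤ ⟨c, (log ρ) c⟩`, from `log t ≤ t - 1` and `q * ⟨c, ρ⁻¹ c⟩ ≤ 1`
  have key : ∀ a, q a * Real.log (q a) ≤
      q a * ∑ j, Complex.normSq (c a j) * Real.log (μ j) := by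
    intro a
    rcases (hq a).eq_or_lt with h0 | hpos
    · simp [← h0]
    refine mul_le_mul_of_nonneg_left ?_ (hq a)
    have h1 : ∀ j, Complex.normSq (c a j) * (Real.log (q a) - Real.log (μ j)) ≤
        q a * (Complex.normSq (c a j) / μ j) - Complex.normSq (c a j) := by
      intro j
      have hle : q a * Complex.normSq (c a j) ≤ μ j := by
        rw [hμ j]
        exact Finset.single_le_sum (f := fun a => q a * Complex.normSq (c a j))
          (fun a _ => mul_nonneg (hq a) (Complex.normSq_nonneg _)) (Finset.mem_univ a)
      rcases (Complex.normSq_nonneg (c a j)).eq_or_lt with hz | hz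
      · simp [← hz]
      have hm : 0 < μ j := lt_of_lt_of_le (by positivity) hle
      rw [← Real.log_div hpos.ne' hm.ne']
      have := mul_le_mul_of_nonneg_left
        (Real.log_le_sub_one_of_pos (div_pos hpos hm)) hz.le
      calc _ ≤ _ := this
        _ = _ := by ring
    have h2 := Finset.sum_le_sum fun j (_ : j ∈ Finset.univ) => h1 j
    simp only [mul_sub, Finset.sum_sub_distrib, ← Finset.mul_sum, ← Finset.sum_mul, hc] at h2
    have h3 := weighted_sum_le_one q hq c μ h a
    linarith
  have h4 := Finset.sum_le_sum fun a (_ : a ∈ Finset.univ) => key a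
  have h5 : ∑ a, q a * ∑ j, Complex.normSq (c a j) * Real.log (μ j) =
      ∑ j, μ j * Real.log (μ j) := by
    simp only [Finset.mul_sum]
    rw [Finset.sum_comm]
    refine Finset.sum_congr rfl fun j _ => ?_
    rw [show μ j * Real.log (μ j) =
      (∑ a, q a * Complex.normSq (c a j)) * Real.log (μ j) by rw [← hμ j], Finset.sum_mul]
    refine Finset.sum_congr rfl fun a _ => ?_
    ring
  simp only [Real.negMulLog, neg_mul, Finset.sum_neg_distrib]
  linarith

/-- Concavity of entropy: a convex combination of doubly stochastic matrices applied to `r`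
does not decrease its entropy. -/
lemma entropy_le_of_mixed_bistochastic {I J Y : Type*} [Fintype I] [Fintype J] [Fintype Y]
    (p : I → ℝ) (hp0 : ∀ i, 0 ≤ p i) (hp1 : ∑ i, p i = 1)
    (D : I → J → Y → ℝ) (hD : ∀ i j y, 0 ≤ D i j y)
    (hrow : ∀ i j, ∑ y, D i j y = 1) (hcol : ∀ i y, ∑ j, D i j y = 1)
    (r : Y → ℝ) (hr : ∀ y, 0 ≤ r y) (μ : J → ℝ)
    (hμ : ∀ j, μ j = ∑ i, p i * ∑ y, D i j y * r y) :
    ∑ y, Real.negMulLog (r y) ≤ ∑ j, Real.negMulLog (μ j) := by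
  have key : ∀ j, ∑ i, ∑ y, p i * D i j y * Real.negMulLog (r y) ≤ Real.negMulLog (μ j) := by
    intro j
    have := Real.concaveOn_negMulLog.le_map_sum (t := (Finset.univ : Finset (I × Y)))
      (w := fun z => p z.1 * D z.1 j z.2) (p := fun z => r z.2)
      (fun z _ => mul_nonneg (hp0 _) (hD _ _ _))
      (by simp only [Fintype.sum_prod_type, ← Finset.mul_sum, hrow, mul_one, hp1])
      (fun z _ => hr _)
    simp only [smul_eq_mul, Fintype.sum_prod_type] at this
    refine this.trans_eq ?_
    rw [hμ j]
    simp only [Finset.mul_sum, mul_assoc]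
  refine le_trans (le_of_eq ?_) (Finset.sum_le_sum fun j _ => key j)
  rw [Finset.sum_comm]
  have h1 : ∀ i, ∑ j, ∑ y, p i * D i j y * Real.negMulLog (r y) =
      p i * ∑ y, Real.negMulLog (r y) := by
    intro i
    rw [Finset.sum_comm, Finset.mul_sum]
    refine Finset.sum_congr rfl fun y _ => ?_
    rw [← Finset.sum_mul, ← Finset.mul_sum, hcol, mul_one]
  simp only [h1, ← Finset.sum_mul, hp1, one_mul]

/-- The entropy bound for a channel expressed in eigenbases: the ancilla is `diag l`, the output is
`diag μ`, and only the classical inputs `|x⟩⟨x| = diagonal (Pi.single x 1)` are used. -/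
lemma log_card_le_of_diagonal {I X K : Type*} [Fintype I] [Fintype X] [Nonempty X]
    [DecidableEq X] [Fintype K] [DecidableEq K]
    (p : I → ℝ) (hp0 : ∀ i, 0 ≤ p i) (hp1 : ∑ i, p i = 1)
    (l : K → ℝ) (hl0 : ∀ k, 0 ≤ l k) (hl1 : ∑ k, l k = 1)
    (W : I → Matrix (X × K) (X × K) ℂ) (hW : ∀ i, W i ∈ Matrix.unitaryGroup (X × K) ℂ)
    (μ : X × K → ℝ)
    (h : ∀ x, ∑ i, (p i : ℂ) • (W i * (diagonal (Pi.single x 1) ⊗ₖ diagonal fun k => (l k : ℂ))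
      * (W i)ᴴ) = diagonal fun j => (μ j : ℂ)) :
    Real.log (Fintype.card X) ≤ ∑ i, Real.negMulLog (p i) := by
  have hrow : ∀ i j, ∑ y, Complex.normSq (W i j y) = 1 := by
    intro i j
    have := congrFun (congrFun (Matrix.mem_unitaryGroup_iff.1 (hW i)) j) j
    simp only [Matrix.mul_apply, Matrix.star_apply, RCLike.star_def, Complex.mul_conj,
      Matrix.one_apply_eq] at this
    exact_mod_cast this
  have hcol : ∀ i y, ∑ j, Complex.normSq (W i j y) = 1 := by
    intro i y
    have := congrFun (congrFun (Matrix.mem_unitaryGroup_iff'.1 (hW i)) y) y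
    simp only [Matrix.mul_apply, Matrix.star_apply, RCLike.star_def, mul_comm (conj _),
      Complex.mul_conj, Matrix.one_apply_eq] at this
    exact_mod_cast this
  have hent : ∀ x j j', ∑ a : I × K, ((p a.1 * l a.2 : ℝ) : ℂ) *
      (W a.1 j (x, a.2) * conj (W a.1 j' (x, a.2))) = if j = j' then (μ j : ℂ) else 0 := by
    intro x j j'
    have := congrFun (congrFun (h x) j) j'
    rw [Matrix.diagonal_apply, diagonal_kronecker_diagonal, Matrix.sum_apply] at this
    rw [← this, Fintype.sum_prod_type]
    refine Finset.sum_congr rfl fun i _ => ?_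
    rw [Matrix.smul_apply, Matrix.mul_apply, Fintype.sum_prod_type,
      Finset.sum_eq_single x, smul_eq_mul, Finset.mul_sum]
    · refine Finset.sum_congr rfl fun k _ => ?_
      simp only [Matrix.mul_diagonal, Pi.single_eq_same, Matrix.conjTranspose_apply,
        RCLike.star_def]
      push_cast
      ring
    · intro y _ hy
      simp [Matrix.mul_diagonal, hy]
    · simp
  have hdiag : ∀ x j, μ j = ∑ i, p i * ∑ k, l k * Complex.normSq (W i j (x, k)) := by
    intro x j
    have := hent x j j
    simp only [if_true, Complex.mul_conj, Fintype.sum_prod_type] at this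
    simp only [Finset.mul_sum, ← mul_assoc]
    exact_mod_cast this.symm
  obtain ⟨x₀⟩ := ‹Nonempty X›
  have hX : (0 : ℝ) < Fintype.card X := by
    exact_mod_cast Fintype.card_pos_iff.2 ⟨x₀⟩
  have upper := entropy_le_of_ensemble (fun a : I × K => p a.1 * l a.2)
    (fun a => mul_nonneg (hp0 _) (hl0 _)) (fun a j => W a.1 j (x₀, a.2)) μ
    (fun a => hcol _ _) (hent x₀)
  have lower := entropy_le_of_mixed_bistochastic p hp0 hp1
    (fun i j y => Complex.normSq (W i j y)) (fun _ _ _ => Complex.normSq_nonneg _) hrow hcol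
    (fun y : X × K => (Fintype.card X : ℝ)⁻¹ * l y.2)
    (fun y => mul_nonneg (by positivity) (hl0 _)) μ (by
      intro j
      -- the output for the uniformly mixed input is the average of the outputs over all `x`
      have h1 : ∑ x : X, (Fintype.card X : ℝ)⁻¹ * μ j = μ j := by
        rw [Finset.sum_const, Finset.card_univ, nsmul_eq_mul]
        field_simp
      rw [← h1]
      rw [Finset.sum_congr rfl fun x _ => by rw [hdiag x j]]
      simp only [Finset.mul_sum, Fintype.sum_prod_type]
      rw [Finset.sum_comm]
      refine Finset.sum_congr rfl fun i _ => Finset.sum_congr rfl fun x _ =>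
        Finset.sum_congr rfl fun k _ => ?_
      ring)
  have e1 : ∑ a : I × K, Real.negMulLog (p a.1 * l a.2) =
      ∑ i, Real.negMulLog (p i) + ∑ k, Real.negMulLog (l k) := by
    simp only [Real.negMulLog_mul, Fintype.sum_prod_type, Finset.sum_add_distrib,
      ← Finset.sum_mul, ← Finset.mul_sum, hl1, hp1, one_mul]
  have e2 : ∑ y : X × K, Real.negMulLog ((Fintype.card X : ℝ)⁻¹ * l y.2) =
      Real.log (Fintype.card X) + ∑ k, Real.negMulLog (l k) := by
    simp only [Real.negMulLog_mul, Fintype.sum_prod_type, Finset.sum_add_distrib,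
      ← Finset.sum_mul, ← Finset.mul_sum, hl1, Finset.sum_const, Finset.card_univ,
      nsmul_eq_mul]
    simp only [Real.negMulLog, Real.log_inv]
    field_simp
  linarith

lemma outer_single {ι : Type*} [DecidableEq ι] (x : ι) :
    outer (Pi.single x 1) = diagonal (Pi.single x 1) := by
  ext i j
  simp only [outer, Matrix.of_apply, Matrix.diagonal_apply, Pi.single_apply]
  split_ifs <;> simp_all

/-- Every classical basis state is a tensor product of real-amplitude states: take the angle `0`
for `|0⟩` and `π / 2` for `|1⟩`. -/
lemma exists_realQubitTensor_eq_single {n : ℕ} (x : Fin n → Fin 2) :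
    ∃ θ : Fin n → ℝ, realQubitTensor θ = Pi.single x 1 := by
  refine ⟨fun k => if x k = 0 then 0 else Real.pi / 2, ?_⟩
  have h : ∀ a b : Fin 2, realQubit (if a = 0 then 0 else Real.pi / 2) b =
      if b = a then 1 else 0 := by
    intro a b
    fin_cases a <;> fin_cases b <;> simp [realQubit]
  ext y
  simp only [realQubitTensor, h, Pi.single_apply, Finset.prod_ite_zero, Finset.prod_const_one,
    funext_iff, Finset.mem_univ, true_implies]

lemma sum_negMulLog_le_log_card {N : ℕ} (p : Fin N → ℝ) (hp0 : ∀ i, 0 ≤ p i)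
    (hp1 : ∑ i, p i = 1) : ∑ i, Real.negMulLog (p i) ≤ Real.log N := by
  have hN : (0 : ℝ) < N := by
    rcases Nat.eq_zero_or_pos N with rfl | h
    · simp at hp1
    · exact_mod_cast h
  have := Real.concaveOn_negMulLog.le_map_sum (t := (Finset.univ : Finset (Fin N)))
      (w := fun _ => (N : ℝ)⁻¹) (p := p) (fun _ _ => by positivity)
      (by simp [hN.ne']) (fun z _ => hp0 _)
  simp only [smul_eq_mul, ← Finset.mul_sum, hp1, mul_one] at this
  rw [Real.negMulLog, Real.log_inv, neg_mul_neg] at this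
  exact le_of_mul_le_mul_left this (by positivity)

lemma exists_unitary_diagonal {ι : Type*} [Fintype ι] [DecidableEq ι] {A : Matrix ι ι ℂ}
    (hA : A.IsHermitian) : ∃ V ∈ Matrix.unitaryGroup ι ℂ,
      A = V * diagonal (fun k => (hA.eigenvalues k : ℂ)) * Vᴴ := by
  refine ⟨hA.eigenvectorUnitary, hA.eigenvectorUnitary.2, ?_⟩
  conv_lhs => rw [hA.spectral_theorem, Unitary.conjStarAlgAut_apply]
  rfl

/-- Any private quantum channel for the set `B^{⊗n}` of tensor products of
real-amplitude qubit states, even one using an ancilla ρ_a, has key entropy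
H(p₁,…,p_N) ≥ n; in particular N ≥ 2ⁿ. Here the 2^m-dimensional total space
is represented as ℂ^{2ⁿ} ⊗ ℂ^{2^{m−n}}. -/
theorem pqc_real_entropy_ge_n (n m N : ℕ) (hnm : n ≤ m)
    (p : Fin N → ℝ) (hp0 : ∀ i, 0 ≤ p i) (hp1 : ∑ i, p i = 1)
    (U : Fin N → Matrix ((Fin n → Fin 2) × Fin (2 ^ (m - n)))
      ((Fin n → Fin 2) × Fin (2 ^ (m - n))) ℂ)
    (hU : ∀ i, U i ∈ Matrix.unitaryGroup ((Fin n → Fin 2) × Fin (2 ^ (m - n))) ℂ)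
    (ρa : Matrix (Fin (2 ^ (m - n))) (Fin (2 ^ (m - n))) ℂ)
    (hρa : ρa.PosSemidef) (hρatr : ρa.trace = 1)
    (ρ₀ : Matrix ((Fin n → Fin 2) × Fin (2 ^ (m - n)))
      ((Fin n → Fin 2) × Fin (2 ^ (m - n))) ℂ)
    (hρ₀ : ρ₀.PosSemidef) (hρ₀tr : ρ₀.trace = 1)
    (hPQC : ∀ θ : Fin n → ℝ,
      ∑ i, (p i : ℂ) • (U i * (outer (realQubitTensor θ) ⊗ₖ ρa) * (U i)ᴴ) = ρ₀) :
    (-∑ i, p i * Real.logb 2 (p i) ≥ n) ∧ 2 ^ n ≤ N := by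
  obtain ⟨V, hV, hVa⟩ := exists_unitary_diagonal hρa.isHermitian
  obtain ⟨E, hE, hE0⟩ := exists_unitary_diagonal hρ₀.isHermitian
  have hEE : Eᴴ * E = 1 := Matrix.mem_unitaryGroup_iff'.1 hE
  have hl1 : ∑ k, hρa.isHermitian.eigenvalues k = 1 := by
    have := hρa.isHermitian.trace_eq_sum_eigenvalues
    rw [hρatr] at this
    apply Complex.ofReal_injective
    push_cast
    exact this.symm
  -- the channel written in the eigenbases of `ρa` (input side) and `ρ₀` (output side)
  have main := log_card_le_of_diagonal p hp0 hp1 hρa.isHermitian.eigenvalues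
    hρa.eigenvalues_nonneg hl1
    (fun i => Eᴴ * U i * ((1 : Matrix (Fin n → Fin 2) (Fin n → Fin 2) ℂ) ⊗ₖ V))
    (fun i => mul_mem (mul_mem (Unitary.star_mem hE) (hU i))
      (Matrix.kronecker_mem_unitary (one_mem _) hV))
    hρ₀.isHermitian.eigenvalues (by
      intro x
      obtain ⟨θ, hθ⟩ := exists_realQubitTensor_eq_single x
      have h0 := hPQC θ
      rw [hθ, outer_single] at h0
      have h1 : diagonal (Pi.single x 1) ⊗ₖ ρa =
          ((1 : Matrix (Fin n → Fin 2) (Fin n → Fin 2) ℂ) ⊗ₖ V) *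
          (diagonal (Pi.single x 1) ⊗ₖ
            diagonal fun k => (hρa.isHermitian.eigenvalues k : ℂ)) *
          ((1 : Matrix (Fin n → Fin 2) (Fin n → Fin 2) ℂ) ⊗ₖ V)ᴴ := by
        rw [conjTranspose_kronecker, ← mul_kronecker_mul, ← mul_kronecker_mul, ← hVa]
        simp
      have h2 : Eᴴ * ρ₀ * E = diagonal fun j => (hρ₀.isHermitian.eigenvalues j : ℂ) := by
        conv_lhs => rw [hE0]
        rw [← Matrix.mul_assoc, ← Matrix.mul_assoc, hEE, Matrix.one_mul, Matrix.mul_assoc, hEE,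
          Matrix.mul_one]
      rw [← h2, ← h0, Finset.mul_sum, Finset.sum_mul]
      refine Finset.sum_congr rfl fun i _ => ?_
      rw [h1]
      simp only [Matrix.conjTranspose_mul, Matrix.conjTranspose_conjTranspose, Matrix.mul_smul,
        Matrix.smul_mul, Matrix.mul_assoc])
  have hcard : (Fintype.card (Fin n → Fin 2) : ℝ) = 2 ^ n := by simp
  rw [hcard] at main
  have hlog2 : 0 < Real.log 2 := Real.log_pos one_lt_two
  constructor
  · have hconv : -∑ i, p i * Real.logb 2 (p i) =
        (∑ i, Real.negMulLog (p i)) / Real.log 2 := by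
      rw [Finset.sum_div, ← Finset.sum_neg_distrib]
      refine Finset.sum_congr rfl fun i _ => ?_
      rw [Real.negMulLog, Real.logb]; ring
    rw [hconv, ge_iff_le, le_div_iff₀ hlog2, ← Real.log_pow]
    exact main
  · have hle := main.trans (sum_negMulLog_le_log_card p hp0 hp1)
    have hN : (0 : ℝ) < N := by
      rcases Nat.eq_zero_or_pos N with rfl | h
      · simp at hp1
      · exact_mod_cast h
    exact_mod_cast (Real.log_le_log_iff (by positivity) hN).1 hle
end
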